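/- arXiv:2403.20294 — 7 statements merged into one kernel-verified Lean document; each statement's English description precedes it below -/
import Mathlib

section
/- For every k ≥ 1, the k-th iterate of the map f_s applied to ℝ^n equals the preimage under the observability matrix of the image of the piecewise s-sparse vectors under the finite response matrix: f_s^k(ℝ^n) = O_k^{-1}(Γ_k ⟨Δ_s⟩^k). -/
/-!
Splitting the first block off an input word `w = (w₀, w')` turns the equation
`O_{k+1} x = Γ_{k+1} w` into `C x = D w₀` together with `O_k (A x - B w₀) = Γ_k w'`
(`obsMat_eq_respMat_succ_iff`). With the input `u = -w₀`, which is as sparse as `w₀`, this says that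
`x ∈ V_{k+1}` iff some sparse `u` gives `C x + D u = 0` and `A x + B u ∈ V_k` (`mem_Vset_succ`).
This recursion is the map `f_s` without its requirement `x ∈ V_k`; that requirement is automatic
since the sets `V_k` decrease, so `f_s(V_k) = V_{k+1}`, and `V_0` is the whole space.
-/

open Matrix BigOperators

namespace SparseInv

variable {n m p : ℕ}

/-- State trajectory of the system `x_{k+1} = A x_k + B u_k` started at `x0`. -/
def traj (A : Matrix (Fin n) (Fin n) ℝ) (B : Matrix (Fin n) (Fin m) ℝ)
    (x0 : Fin n → ℝ) (u : ℕ → Fin m → ℝ) : ℕ → (Fin n → ℝ)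
  | 0 => x0
  | k + 1 => A.mulVec (traj A B x0 u k) + B.mulVec (u k)

/-- Response `γ(x0,u)_k = C x_k + D u_k`. -/
def resp (A : Matrix (Fin n) (Fin n) ℝ) (B : Matrix (Fin n) (Fin m) ℝ)
    (C : Matrix (Fin p) (Fin n) ℝ) (D : Matrix (Fin p) (Fin m) ℝ)
    (x0 : Fin n → ℝ) (u : ℕ → Fin m → ℝ) (k : ℕ) : Fin p → ℝ :=
  C.mulVec (traj A B x0 u k) + D.mulVec (u k)

/-- `⟨S⟩ = span{e_i : i ∈ S}`, i.e. vectors supported on `S`. -/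
def suppSpan (S : Finset (Fin m)) : Set (Fin m → ℝ) := {v | ∀ i ∉ S, v i = 0}

/-- `⟨Δ_s⟩`: the set of `s`-sparse vectors in `ℝ^m`. -/
def sparseVecs (m s : ℕ) : Set (Fin m → ℝ) :=
  ⋃ S ∈ {S : Finset (Fin m) | S.card ≤ s}, suppSpan S

/-- Observability matrix `O_N`. -/
def obsMat (A : Matrix (Fin n) (Fin n) ℝ) (C : Matrix (Fin p) (Fin n) ℝ) (N : ℕ) :
    Matrix (Fin N × Fin p) (Fin n) ℝ :=
  Matrix.of fun ir j => (C * A ^ (ir.1 : ℕ)) ir.2 j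

/-- Controllability matrix `𝒞_N = [A^{N-1}B, …, AB, B]`. -/
def ctrbMat (A : Matrix (Fin n) (Fin n) ℝ) (B : Matrix (Fin n) (Fin m) ℝ) (N : ℕ) :
    Matrix (Fin n) (Fin N × Fin m) ℝ :=
  Matrix.of fun i jc => (A ^ (N - 1 - (jc.1 : ℕ)) * B) i jc.2

/-- Finite response matrix `Γ_N`. -/
def respMat (A : Matrix (Fin n) (Fin n) ℝ) (B : Matrix (Fin n) (Fin m) ℝ)
    (C : Matrix (Fin p) (Fin n) ℝ) (D : Matrix (Fin p) (Fin m) ℝ) (N : ℕ) :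
    Matrix (Fin N × Fin p) (Fin N × Fin m) ℝ :=
  Matrix.of fun ir jc =>
    if (ir.1 : ℕ) = (jc.1 : ℕ) then D ir.2 jc.2
    else if (jc.1 : ℕ) < (ir.1 : ℕ) then
      (C * A ^ ((ir.1 : ℕ) - (jc.1 : ℕ) - 1) * B) ir.2 jc.2
    else 0

/-- `[u]_0^N`, the stacked vector of the first `N` inputs. -/
def stack (N : ℕ) (u : ℕ → Fin m → ℝ) : Fin N × Fin m → ℝ := fun jc => u jc.1 jc.2

/-- `⟨Δ_s⟩^k` membership for a stacked vector. -/
def blockSparse (k s : ℕ) (w : Fin k × Fin m → ℝ) : Prop :=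
  ∀ i : Fin k, (fun c => w (i, c)) ∈ sparseVecs m s

/-- `V_k(s) = O_k^{-1}(Γ_k ⟨Δ_s⟩^k)`. -/
def Vset (A : Matrix (Fin n) (Fin n) ℝ) (B : Matrix (Fin n) (Fin m) ℝ)
    (C : Matrix (Fin p) (Fin n) ℝ) (D : Matrix (Fin p) (Fin m) ℝ) (s k : ℕ) :
    Set (Fin n → ℝ) :=
  {x | ∃ w : Fin k × Fin m → ℝ, blockSparse k s w ∧
    (obsMat A C k).mulVec x = (respMat A B C D k).mulVec w}

/-- `T_k(s) = 𝒞_k(ker Γ_k ∩ ⟨Δ_s⟩^k)`. -/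
def Tset (A : Matrix (Fin n) (Fin n) ℝ) (B : Matrix (Fin n) (Fin m) ℝ)
    (C : Matrix (Fin p) (Fin n) ℝ) (D : Matrix (Fin p) (Fin m) ℝ) (s k : ℕ) :
    Set (Fin n → ℝ) :=
  {x | ∃ w : Fin k × Fin m → ℝ, blockSparse k s w ∧
    (respMat A B C D k).mulVec w = 0 ∧ (ctrbMat A B k).mulVec w = x}

/-- The weakly `s`-sparse unobservable set `V(s)`. -/
def weaklyUnobs (A : Matrix (Fin n) (Fin n) ℝ) (B : Matrix (Fin n) (Fin m) ℝ)
    (C : Matrix (Fin p) (Fin n) ℝ) (D : Matrix (Fin p) (Fin m) ℝ) (s : ℕ) :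
    Set (Fin n → ℝ) :=
  {x | ∃ u : ℕ → Fin m → ℝ, (∀ k, u k ∈ sparseVecs m s) ∧
    ∀ k, resp A B C D x u k = 0}

/-- The strongly `s`-sparse reachable set `T(s)`. -/
def stronglyReach (A : Matrix (Fin n) (Fin n) ℝ) (B : Matrix (Fin n) (Fin m) ℝ)
    (C : Matrix (Fin p) (Fin n) ℝ) (D : Matrix (Fin p) (Fin m) ℝ) (s : ℕ) :
    Set (Fin n → ℝ) :=
  {x | ∃ (N : ℕ), 1 ≤ N ∧ ∃ u : ℕ → Fin m → ℝ, (∀ k, u k ∈ sparseVecs m s) ∧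
    (respMat A B C D N).mulVec (stack N u) = 0 ∧ (ctrbMat A B N).mulVec (stack N u) = x}

/-- Left `s`-sparse invertibility. -/
def leftSparseInv (A : Matrix (Fin n) (Fin n) ℝ) (B : Matrix (Fin n) (Fin m) ℝ)
    (C : Matrix (Fin p) (Fin n) ℝ) (D : Matrix (Fin p) (Fin m) ℝ) (s : ℕ) : Prop :=
  ∀ u u' : ℕ → Fin m → ℝ, (∀ k, u k ∈ sparseVecs m s) → (∀ k, u' k ∈ sparseVecs m s) →
    (∀ k, resp A B C D 0 u k = resp A B C D 0 u' k) → u = u'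

/-- The set map `f_s`. -/
def fmap (A : Matrix (Fin n) (Fin n) ℝ) (B : Matrix (Fin n) (Fin m) ℝ)
    (C : Matrix (Fin p) (Fin n) ℝ) (D : Matrix (Fin p) (Fin m) ℝ) (s : ℕ)
    (𝒜 : Set (Fin n → ℝ)) : Set (Fin n → ℝ) :=
  {x ∈ 𝒜 | ∃ u ∈ sparseVecs m s,
    C.mulVec x + D.mulVec u = 0 ∧ A.mulVec x + B.mulVec u ∈ 𝒜}

/-- Finite subspace arrangement. -/
def IsFSA {V : Type*} [AddCommGroup V] [Module ℝ V] (𝒜 : Set V) : Prop :=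
  ∃ (c : ℕ) (U : Fin c → Submodule ℝ V), 𝒜 = ⋃ i, (U i : Set V)

/-- Block-column selection `Γ_S` of the finite response matrix. -/
def respSel (A : Matrix (Fin n) (Fin n) ℝ) (B : Matrix (Fin n) (Fin m) ℝ)
    (C : Matrix (Fin p) (Fin n) ℝ) (D : Matrix (Fin p) (Fin m) ℝ) (N : ℕ)
    (S : Fin N → Finset (Fin m)) :
    Matrix (Fin N × Fin p) ((i : Fin N) × {j // j ∈ S i}) ℝ :=
  Matrix.of fun ir jc => respMat A B C D N ir (jc.1, (jc.2 : Fin m))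

/-- Block-column selection `𝒞_S` of the controllability matrix. -/
def ctrbSel (A : Matrix (Fin n) (Fin n) ℝ) (B : Matrix (Fin n) (Fin m) ℝ) (N : ℕ)
    (S : Fin N → Finset (Fin m)) :
    Matrix (Fin n) ((i : Fin N) × {j // j ∈ S i}) ℝ :=
  Matrix.of fun i jc => ctrbMat A B N i (jc.1, (jc.2 : Fin m))

/-- Inputs with `τ`-periodic `s`-sparse supports, `U_τ(s)`. -/
def periodicSparse (m τ s : ℕ) : Set (ℕ → Fin m → ℝ) :=
  {u | ∃ S : ℕ → Finset (Fin m), (∀ k, (S k).card ≤ s) ∧ (∀ k, S (k + τ) = S k) ∧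
    ∀ k, u k ∈ suppSpan (S k)}

/-- Left invertibility over an input class `𝒰`. -/
def leftUInv (A : Matrix (Fin n) (Fin n) ℝ) (B : Matrix (Fin n) (Fin m) ℝ)
    (C : Matrix (Fin p) (Fin n) ℝ) (D : Matrix (Fin p) (Fin m) ℝ)
    (𝒰 : Set (ℕ → Fin m → ℝ)) : Prop :=
  ∀ u ∈ 𝒰, ∀ u' ∈ 𝒰, (∀ k, resp A B C D 0 u k = resp A B C D 0 u' k) → u = u'


theorem neg_mem_sparseVecs {s : ℕ} {v : Fin m → ℝ} (hv : v ∈ sparseVecs m s) :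
    -v ∈ sparseVecs m s := by
  simp only [sparseVecs, suppSpan, Set.mem_iUnion, Set.mem_ofPred_eq, exists_prop] at hv ⊢
  obtain ⟨S, hS, h⟩ := hv
  exact ⟨S, hS, fun i hi => by simp [h i hi]⟩

theorem obsMat_mulVec (A : Matrix (Fin n) (Fin n) ℝ) (C : Matrix (Fin p) (Fin n) ℝ) (N : ℕ)
    (x : Fin n → ℝ) (i : Fin N) (r : Fin p) :
    (obsMat A C N).mulVec x (i, r) = ((C * A ^ (i : ℕ)).mulVec x) r := rfl

theorem respMat_mulVec_zero (A : Matrix (Fin n) (Fin n) ℝ) (B : Matrix (Fin n) (Fin m) ℝ)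
    (C : Matrix (Fin p) (Fin n) ℝ) (D : Matrix (Fin p) (Fin m) ℝ) (k : ℕ)
    (w : Fin (k + 1) × Fin m → ℝ) (r : Fin p) :
    (respMat A B C D (k + 1)).mulVec w (0, r) = (D.mulVec fun c => w (0, c)) r := by
  simp [respMat, Matrix.mulVec, dotProduct, Fintype.sum_prod_type, Fin.sum_univ_succ]

/-- Below the first block row, `Γ_{k+1}` has first block column `O_k B` and remainder `Γ_k`. -/
theorem respMat_mulVec_succ (A : Matrix (Fin n) (Fin n) ℝ) (B : Matrix (Fin n) (Fin m) ℝ)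
    (C : Matrix (Fin p) (Fin n) ℝ) (D : Matrix (Fin p) (Fin m) ℝ) (k : ℕ)
    (w : Fin (k + 1) × Fin m → ℝ) (i : Fin k) (r : Fin p) :
    (respMat A B C D (k + 1)).mulVec w (i.succ, r) =
      (obsMat A C k).mulVec (B.mulVec fun c => w (0, c)) (i, r) +
        (respMat A B C D k).mulVec (fun jc => w (jc.1.succ, jc.2)) (i, r) := by
  rw [obsMat_mulVec, Matrix.mulVec_mulVec]
  simp [respMat, Matrix.mulVec, dotProduct, Fintype.sum_prod_type, Fin.sum_univ_succ]

theorem obsMat_eq_respMat_succ_iff (A : Matrix (Fin n) (Fin n) ℝ) (B : Matrix (Fin n) (Fin m) ℝ)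
    (C : Matrix (Fin p) (Fin n) ℝ) (D : Matrix (Fin p) (Fin m) ℝ) (k : ℕ)
    (x : Fin n → ℝ) (w : Fin (k + 1) × Fin m → ℝ) :
    (obsMat A C (k + 1)).mulVec x = (respMat A B C D (k + 1)).mulVec w ↔
      C.mulVec x = (D.mulVec fun c => w (0, c)) ∧
      (obsMat A C k).mulVec (A.mulVec x - B.mulVec fun c => w (0, c)) =
        (respMat A B C D k).mulVec fun jc => w (jc.1.succ, jc.2) := by
  have obs_succ (i : Fin k) (r : Fin p) : (obsMat A C (k + 1)).mulVec x (i.succ, r) =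
      (obsMat A C k).mulVec (A.mulVec x) (i, r) := by
    rw [obsMat_mulVec, obsMat_mulVec, Matrix.mulVec_mulVec, Fin.val_succ, pow_succ,
      Matrix.mul_assoc]
  have obs_zero (r : Fin p) : (obsMat A C (k + 1)).mulVec x (0, r) = C.mulVec x r := by
    simp [obsMat_mulVec]
  simp only [funext_iff, Prod.forall, Fin.forall_fin_succ, obs_zero, obs_succ,
    respMat_mulVec_zero, respMat_mulVec_succ, Matrix.mulVec_sub, Pi.add_apply, sub_eq_iff_eq_add']

theorem mem_Vset_succ (A : Matrix (Fin n) (Fin n) ℝ) (B : Matrix (Fin n) (Fin m) ℝ)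
    (C : Matrix (Fin p) (Fin n) ℝ) (D : Matrix (Fin p) (Fin m) ℝ) (s k : ℕ) (x : Fin n → ℝ) :
    x ∈ Vset A B C D s (k + 1) ↔ ∃ u ∈ sparseVecs m s,
      C.mulVec x + D.mulVec u = 0 ∧ A.mulVec x + B.mulVec u ∈ Vset A B C D s k := by
  constructor
  · rintro ⟨w, hw, h⟩
    rw [obsMat_eq_respMat_succ_iff] at h
    refine ⟨-fun c => w (0, c), neg_mem_sparseVecs (hw 0), ?_,
      fun jc => w (jc.1.succ, jc.2), fun i => hw i.succ, ?_⟩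
    · rw [Matrix.mulVec_neg, h.1, add_neg_cancel]
    · rw [Matrix.mulVec_neg, ← sub_eq_add_neg, h.2]
  · rintro ⟨u, hu, h0, w, hw, h⟩
    refine ⟨fun jc => (Fin.cons (-u) (fun i c => w (i, c)) : Fin (k + 1) → Fin m → ℝ) jc.1 jc.2,
      fun i => ?_, ?_⟩
    · cases i using Fin.cases with
      | zero => exact neg_mem_sparseVecs hu
      | succ i => exact hw i
    · rw [obsMat_eq_respMat_succ_iff]
      constructor
      · change C.mulVec x = D.mulVec (-u)
        rw [Matrix.mulVec_neg, eq_neg_iff_add_eq_zero, h0]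
      · change (obsMat A C k).mulVec (A.mulVec x - B.mulVec (-u)) = (respMat A B C D k).mulVec w
        rw [Matrix.mulVec_neg, sub_neg_eq_add, h]

theorem Vset_zero (A : Matrix (Fin n) (Fin n) ℝ) (B : Matrix (Fin n) (Fin m) ℝ)
    (C : Matrix (Fin p) (Fin n) ℝ) (D : Matrix (Fin p) (Fin m) ℝ) (s : ℕ) :
    Vset A B C D s 0 = Set.univ :=
  Set.eq_univ_of_forall fun _ => ⟨0, fun i => i.elim0, funext fun ir => ir.1.elim0⟩

theorem Vset_succ_subset (A : Matrix (Fin n) (Fin n) ℝ) (B : Matrix (Fin n) (Fin m) ℝ)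
    (C : Matrix (Fin p) (Fin n) ℝ) (D : Matrix (Fin p) (Fin m) ℝ) (s k : ℕ) :
    Vset A B C D s (k + 1) ⊆ Vset A B C D s k := by
  induction k with
  | zero => simp [Vset_zero]
  | succ k ih =>
    intro x hx
    rw [mem_Vset_succ] at hx ⊢
    obtain ⟨u, hu, h0, h⟩ := hx
    exact ⟨u, hu, h0, ih h⟩

theorem fmap_Vset (A : Matrix (Fin n) (Fin n) ℝ) (B : Matrix (Fin n) (Fin m) ℝ)
    (C : Matrix (Fin p) (Fin n) ℝ) (D : Matrix (Fin p) (Fin m) ℝ) (s k : ℕ) :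
    fmap A B C D s (Vset A B C D s k) = Vset A B C D s (k + 1) := by
  ext x
  exact ⟨fun hx => (mem_Vset_succ A B C D s k x).2 hx.2,
    fun hx => ⟨Vset_succ_subset A B C D s k hx, (mem_Vset_succ A B C D s k x).1 hx⟩⟩

/-- Lemma 1: for every `k ≥ 1`, `f_s^k(ℝ^n) = O_k^{-1}(Γ_k ⟨Δ_s⟩^k)`. -/
theorem fmap_iterate_eq_Vset (n m p : ℕ)
    (A : Matrix (Fin n) (Fin n) ℝ) (B : Matrix (Fin n) (Fin m) ℝ)
    (C : Matrix (Fin p) (Fin n) ℝ) (D : Matrix (Fin p) (Fin m) ℝ) (s : ℕ) :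
    ∀ k : ℕ, 1 ≤ k →
      (fmap A B C D s)^[k] Set.univ = Vset A B C D s k := by
  -- The identity also holds at `k = 0`, where both sides are the whole space.
  rintro k -
  induction k with
  | zero => simp [Vset_zero]
  | succ k ih => rw [Function.iterate_succ_apply', ih, fmap_Vset]

end SparseInv
end

section
/- If a set 𝒱* ⊆ ℝ^n is a fixed point of the map f_s, i.e., f_s(𝒱*) = 𝒱*, then every point of 𝒱* is weakly s-sparse unobservable: 𝒱* ⊆ V(s). -/
/-!
On a fixed point of `f_s`, each state admits an `s`-sparse input that zeroes the output and keeps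
the next state in the set. Choosing such an input at each state gives a feedback law, and the
inputs it produces along the closed-loop orbit, which never leaves the set, are an `s`-sparse
input sequence with zero response.
-/

open Matrix BigOperators

namespace SparseInv

variable {n m p : ℕ}

/-- Any fixed point of `f_s` consists of weakly `s`-sparse unobservable points. -/
theorem fixedPoint_subset_weaklyUnobs (n m p : ℕ)
    (A : Matrix (Fin n) (Fin n) ℝ) (B : Matrix (Fin n) (Fin m) ℝ)
    (C : Matrix (Fin p) (Fin n) ℝ) (D : Matrix (Fin p) (Fin m) ℝ) (s : ℕ)
    (𝒱star : Set (Fin n → ℝ)) (hfix : fmap A B C D s 𝒱star = 𝒱star) :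
    𝒱star ⊆ weaklyUnobs A B C D s := by
  -- A total feedback law `F`, constrained only on `𝒱star`.
  have hF : ∀ x, ∃ u, x ∈ 𝒱star → u ∈ sparseVecs m s ∧
      C.mulVec x + D.mulVec u = 0 ∧ A.mulVec x + B.mulVec u ∈ 𝒱star := by
    intro x
    by_cases hx : x ∈ 𝒱star
    · obtain ⟨-, u, hu⟩ : x ∈ fmap A B C D s 𝒱star := hfix.symm ▸ hx
      exact ⟨u, fun _ => hu⟩
    · exact ⟨0, fun h => absurd h hx⟩
  choose F hF using hF
  intro x0 hx0
  -- The closed-loop orbit, generated by `F` without reference to an input sequence.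
  let g : ℕ → Fin n → ℝ := fun k => (fun x => A.mulVec x + B.mulVec (F x))^[k] x0
  have hsucc : ∀ k, g (k + 1) = A.mulVec (g k) + B.mulVec (F (g k)) :=
    fun k => Function.iterate_succ_apply' _ k x0
  have hg : ∀ k, g k ∈ 𝒱star := by
    intro k
    induction k with
    | zero => exact hx0
    | succ k ih => rw [hsucc]; exact (hF _ ih).2.2
  have htraj : ∀ k, traj A B x0 (fun j => F (g j)) k = g k := by
    intro k
    induction k with
    | zero => rfl
    | succ k ih => rw [hsucc, traj, ih]
  refine ⟨fun k => F (g k), fun k => (hF _ (hg k)).1, fun k => ?_⟩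
  rw [resp, htraj]
  exact (hF _ (hg k)).2.1

end SparseInv
end

section
/- The sets T_k(s) satisfy the recursion T_{k+1}(s) = [A B] ((T_k(s) × ⟨Δ_s⟩) ∩ ker [C D]), i.e., T_{k+1}(s) = { A x + B u : x ∈ T_k(s), u ∈ ⟨Δ_s⟩, C x + D u = 0 }, with T_1(s) = B(ker D ∩ ⟨Δ_s⟩). -/
/-!
Split a stacked input of length `k + 1` into its first `k` blocks `w'` and its last block `u`. Since
`𝒞_{k+1} = [A 𝒞_k  B]` and `Γ_{k+1}` is the block matrix with rows `[Γ_k  0]` and `[C 𝒞_k  D]`, the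
input lies in `ker Γ_{k+1}` iff `w' ∈ ker Γ_k` and `C y + D u = 0` for `y = 𝒞_k w'`, and then
`𝒞_{k+1}` sends it to `A y + B u` (`ctrbMat_mulVec_succ`, `respMat_mulVec_castSucc`,
`respMat_mulVec_last`). Block sparsity splits in the same way. All of this is valid from `k = 0`,
where `T_0(s) = {0}`, so the formula for `T_1(s)` is the case `k = 0` of the recursion.
-/

open Matrix BigOperators

namespace SparseInv

variable {n m p : ℕ}

lemma ctrbMat_mulVec (A : Matrix (Fin n) (Fin n) ℝ) (B : Matrix (Fin n) (Fin m) ℝ) (k : ℕ)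
    (w : Fin k × Fin m → ℝ) :
    (ctrbMat A B k).mulVec w =
      ∑ j : Fin k, (A ^ (k - 1 - (j : ℕ)) * B).mulVec fun c => w (j, c) := by
  ext i
  simp [ctrbMat, Matrix.mulVec, dotProduct, Fintype.sum_prod_type, Finset.sum_apply]

/-- Appending an input block performs one step of the dynamics: `𝒞_{k+1} = [A 𝒞_k  B]`. -/
lemma ctrbMat_mulVec_succ (A : Matrix (Fin n) (Fin n) ℝ) (B : Matrix (Fin n) (Fin m) ℝ) (k : ℕ)
    (w : Fin (k + 1) × Fin m → ℝ) :
    (ctrbMat A B (k + 1)).mulVec w =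
      A.mulVec ((ctrbMat A B k).mulVec fun jc => w (jc.1.castSucc, jc.2)) +
        B.mulVec fun c => w (Fin.last k, c) := by
  rw [ctrbMat_mulVec, ctrbMat_mulVec, Fin.sum_univ_castSucc, Matrix.mulVec_sum]
  congr 1
  · refine Finset.sum_congr rfl fun j _ => ?_
    have hj : k + 1 - 1 - (j.castSucc : ℕ) = (k - 1 - (j : ℕ)) + 1 := by
      have := j.isLt
      simp only [Fin.val_castSucc]
      omega
    rw [hj, pow_succ', Matrix.mulVec_mulVec, Matrix.mul_assoc]
  · simp

/-- The first `k` block rows of `Γ_{k+1}` are `[Γ_k  0]`. -/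
lemma respMat_mulVec_castSucc (A : Matrix (Fin n) (Fin n) ℝ) (B : Matrix (Fin n) (Fin m) ℝ)
    (C : Matrix (Fin p) (Fin n) ℝ) (D : Matrix (Fin p) (Fin m) ℝ) (k : ℕ)
    (w : Fin (k + 1) × Fin m → ℝ) (i : Fin k) (r : Fin p) :
    (respMat A B C D (k + 1)).mulVec w (i.castSucc, r) =
      (respMat A B C D k).mulVec (fun jc => w (jc.1.castSucc, jc.2)) (i, r) := by
  have h1 : (i : ℕ) ≠ k := i.isLt.ne
  have h2 : ¬ Fin.last k < i.castSucc := (Fin.castSucc_lt_last i).not_gt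
  simp [respMat, Matrix.mulVec, dotProduct, Fintype.sum_prod_type, Fin.sum_univ_castSucc, h1, h2]

/-- The last block row of `Γ_{k+1}` is `[C 𝒞_k  D]`. -/
lemma respMat_mulVec_last (A : Matrix (Fin n) (Fin n) ℝ) (B : Matrix (Fin n) (Fin m) ℝ)
    (C : Matrix (Fin p) (Fin n) ℝ) (D : Matrix (Fin p) (Fin m) ℝ) (k : ℕ)
    (w : Fin (k + 1) × Fin m → ℝ) (r : Fin p) :
    (respMat A B C D (k + 1)).mulVec w (Fin.last k, r) =
      (C.mulVec ((ctrbMat A B k).mulVec fun jc => w (jc.1.castSucc, jc.2)) +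
        D.mulVec fun c => w (Fin.last k, c)) r := by
  rw [ctrbMat_mulVec, Matrix.mulVec_sum]
  simp only [respMat, Matrix.mulVec, dotProduct, Fintype.sum_prod_type, Fin.sum_univ_castSucc,
    Pi.add_apply, Finset.sum_apply, Matrix.of_apply, Fin.val_last, if_true]
  congr 1
  refine Finset.sum_congr rfl fun j _ => ?_
  have h1 : k ≠ (j : ℕ) := j.isLt.ne'
  have h2 : k - (j : ℕ) - 1 = k - 1 - (j : ℕ) := by omega
  have h3 := congrFun (Matrix.mulVec_mulVec (fun c => w (j.castSucc, c)) C
    (A ^ (k - 1 - (j : ℕ)) * B)) r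
  simp only [Matrix.mulVec, dotProduct] at h3
  simp only [Fin.val_castSucc, h1, if_false, j.isLt, if_true, h2, Matrix.mul_assoc]
  exact h3.symm

/-- The recursion for every `k`, including `k = 0`. -/
lemma Tset_succ (A : Matrix (Fin n) (Fin n) ℝ) (B : Matrix (Fin n) (Fin m) ℝ)
    (C : Matrix (Fin p) (Fin n) ℝ) (D : Matrix (Fin p) (Fin m) ℝ) (s k : ℕ) :
    Tset A B C D s (k + 1) =
      {x | ∃ y ∈ Tset A B C D s k, ∃ u ∈ sparseVecs m s,
        C.mulVec y + D.mulVec u = 0 ∧ x = A.mulVec y + B.mulVec u} := by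
  ext x
  constructor
  · rintro ⟨w, hw, h0, rfl⟩
    refine ⟨_, ⟨fun jc => w (jc.1.castSucc, jc.2), fun i => hw i.castSucc, ?_, rfl⟩,
      fun c => w (Fin.last k, c), hw _, ?_, ctrbMat_mulVec_succ A B k w⟩
    · ext ⟨i, r⟩
      rw [← respMat_mulVec_castSucc, h0]
      rfl
    · ext r
      rw [← respMat_mulVec_last, h0]
      rfl
  · rintro ⟨_, ⟨w, hw, h0, rfl⟩, u, hu, hc, rfl⟩
    -- the input `w` followed by the block `u`
    let v : Fin (k + 1) × Fin m → ℝ := fun jc =>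
      Fin.snoc (α := fun _ => Fin m → ℝ) (fun j c => w (j, c)) u jc.1 jc.2
    have hv1 : (fun jc : Fin k × Fin m => v (jc.1.castSucc, jc.2)) = w := by
      ext jc
      simp [v]
    have hv2 : (fun c => v (Fin.last k, c)) = u := by
      ext c
      simp [v]
    refine ⟨v, fun i => ?_, ?_, ?_⟩
    · induction i using Fin.lastCases with
      | last => rw [hv2]; exact hu
      | cast j => simpa [v] using hw j
    · ext ⟨i, r⟩
      induction i using Fin.lastCases with
      | last => rw [respMat_mulVec_last, hv1, hv2, hc]; rfl
      | cast j => rw [respMat_mulVec_castSucc, hv1, h0]; rfl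
    · rw [ctrbMat_mulVec_succ, hv1, hv2]

lemma Tset_zero (A : Matrix (Fin n) (Fin n) ℝ) (B : Matrix (Fin n) (Fin m) ℝ)
    (C : Matrix (Fin p) (Fin n) ℝ) (D : Matrix (Fin p) (Fin m) ℝ) (s : ℕ) :
    Tset A B C D s 0 = {0} := by
  ext x
  simp only [Set.mem_singleton_iff]
  constructor
  · rintro ⟨w, -, -, rfl⟩
    simp [ctrbMat_mulVec]
  · rintro rfl
    exact ⟨0, fun i => i.elim0, Matrix.mulVec_zero _, Matrix.mulVec_zero _⟩

/-- Corollary 1: the sets `T_k(s)` satisfy the recursion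
`T_{k+1}(s) = [A B]((T_k(s) × ⟨Δ_s⟩) ∩ ker [C D])`, with `T_1(s) = B(ker D ∩ ⟨Δ_s⟩)`. -/
theorem Tset_recursion (n m p : ℕ)
    (A : Matrix (Fin n) (Fin n) ℝ) (B : Matrix (Fin n) (Fin m) ℝ)
    (C : Matrix (Fin p) (Fin n) ℝ) (D : Matrix (Fin p) (Fin m) ℝ) (s : ℕ) :
    (∀ k : ℕ, 1 ≤ k →
      Tset A B C D s (k + 1) =
        {x | ∃ y ∈ Tset A B C D s k, ∃ u ∈ sparseVecs m s,
          C.mulVec y + D.mulVec u = 0 ∧ x = A.mulVec y + B.mulVec u}) ∧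
    Tset A B C D s 1 =
      {x | ∃ u ∈ sparseVecs m s, D.mulVec u = 0 ∧ x = B.mulVec u} := by
  refine ⟨fun k _ => Tset_succ A B C D s k, ?_⟩
  rw [show (1 : ℕ) = 0 + 1 from rfl, Tset_succ, Tset_zero]
  simp

end SparseInv
end

section
/- Let Σ = (A,B,C,D) be a discrete-time linear system. The following are equivalent: (1) Σ is left s-sparse invertible; (2) T(2s) ∩ V(2s) = {0} and for every S ∈ Δ_{2s}, the matrix [D_S; B_S] (D_S stacked on B_S) has trivial kernel; (3) for all S, T ∈ Δ_s, ker D_{S∪T} ∩ B^{-1}V(2s) = {0}, meaning: the only u ∈ ⟨S∪T⟩ with D u = 0 and B u ∈ V(2s) is u = 0. -/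
/-!
By linearity, and because a vector is `2s`-sparse exactly when it is a difference of two `s`-sparse
vectors (`sparse_sub`, `sparse_split`), left `s`-sparse invertibility says that a `2s`-sparse input
with zero response from the zero state vanishes (`leftSparseInv.eq_zero`). Everything else is
time-invariance (`traj_add`): an input with zero response can be cut at any time `N`, the first part
placing the state at time `N` in `T(2s)` and the second part placing it in `V(2s)`; conversely, two
such parts can be concatenated (`zero_resp_concat`).

For (1) ⇒ (2), a common point of `T(2s)` and `V(2s)` gives a concatenated input with zero response,
hence the zero input, hence the zero state. For (2) ⇒ (3), if `D v = 0` then `B v` is reached in one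
step, so it lies in `T(2s)`. For (3) ⇒ (1), an input difference with zero response is shown to
vanish one time step after the other, the state remaining at zero throughout.
-/

open Matrix BigOperators

namespace SparseInv

variable {n m p : ℕ}

/-! ### Trajectories and responses -/

section Dynamics

variable (A : Matrix (Fin n) (Fin n) ℝ) (B : Matrix (Fin n) (Fin m) ℝ)
  (C : Matrix (Fin p) (Fin n) ℝ) (D : Matrix (Fin p) (Fin m) ℝ)

lemma traj_sub (x y : Fin n → ℝ) (u v : ℕ → Fin m → ℝ) (k : ℕ) :
    traj A B (x - y) (fun j => u j - v j) k = traj A B x u k - traj A B y v k := by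
  induction k with
  | zero => rfl
  | succ k ih => simp only [traj, ih, Matrix.mulVec_sub]; abel

lemma resp_sub (x y : Fin n → ℝ) (u v : ℕ → Fin m → ℝ) (k : ℕ) :
    resp A B C D (x - y) (fun j => u j - v j) k = resp A B C D x u k - resp A B C D y v k := by
  simp only [resp, traj_sub, Matrix.mulVec_sub]; abel

lemma traj_congr (x : Fin n → ℝ) {u v : ℕ → Fin m → ℝ} {N : ℕ} (h : ∀ k < N, u k = v k) :
    traj A B x u N = traj A B x v N := by
  induction N with
  | zero => rfl
  | succ N ih => simp only [traj, ih fun k hk => h k (by omega), h N (by omega)]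

/-- Time-invariance: after time `N` the system restarts from its current state. -/
lemma traj_add (x : Fin n → ℝ) (u : ℕ → Fin m → ℝ) (N k : ℕ) :
    traj A B x u (N + k) = traj A B (traj A B x u N) (fun j => u (N + j)) k := by
  induction k with
  | zero => rfl
  | succ k ih => rw [← Nat.add_assoc]; simp only [traj, ih]

lemma resp_add (x : Fin n → ℝ) (u : ℕ → Fin m → ℝ) (N k : ℕ) :
    resp A B C D x u (N + k) = resp A B C D (traj A B x u N) (fun j => u (N + j)) k := by
  simp only [resp, traj_add]

lemma traj_zero_input (k : ℕ) : traj A B 0 (fun _ => 0) k = 0 := by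
  induction k with
  | zero => rfl
  | succ k ih => simp [traj, ih]

lemma resp_zero_input (k : ℕ) : resp A B C D 0 (fun _ => 0) k = 0 := by
  simp [resp, traj_zero_input]

/-- Variation of constants from the zero state. -/
lemma traj_eq_sum (u : ℕ → Fin m → ℝ) (k : ℕ) :
    traj A B 0 u k = ∑ j ∈ Finset.range k, (A ^ (k - 1 - j) * B).mulVec (u j) := by
  induction k with
  | zero => rfl
  | succ k ih =>
    rw [Finset.sum_range_succ, traj, ih, Matrix.mulVec_sum]
    simp only [Nat.add_sub_cancel, Nat.sub_self, pow_zero, Matrix.one_mul]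
    congr 1
    refine Finset.sum_congr rfl fun j hj => ?_
    have hj' := Finset.mem_range.1 hj
    rw [Matrix.mulVec_mulVec, ← Matrix.mul_assoc, ← pow_succ']
    congr 3
    omega

/-- `𝒞_N` maps the first `N` inputs to the state they reach from zero at time `N`. -/
lemma ctrbMat_mulVec_stack (u : ℕ → Fin m → ℝ) (N : ℕ) :
    (ctrbMat A B N).mulVec (stack N u) = traj A B 0 u N := by
  ext i
  rw [traj_eq_sum, Finset.sum_apply,
    Finset.sum_range (fun j => (A ^ (N - 1 - j) * B).mulVec (u j) i)]
  simp only [Matrix.mulVec, dotProduct, ctrbMat, stack, Matrix.of_apply, Fintype.sum_prod_type]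

/-- `Γ_N` maps the first `N` inputs to the first `N` outputs from the zero state. -/
lemma respMat_mulVec_stack (u : ℕ → Fin m → ℝ) (N : ℕ) (i : Fin N) (r : Fin p) :
    (respMat A B C D N).mulVec (stack N u) (i, r) = resp A B C D 0 u i r := by
  -- The `j`-th summand of block row `i`, as a function of a natural number `j`.
  let f : ℕ → ℝ := fun j =>
    if (i : ℕ) = j then D.mulVec (u j) r
    else if j < i then (C * A ^ ((i : ℕ) - j - 1) * B).mulVec (u j) r else 0
  have h1 : (respMat A B C D N).mulVec (stack N u) (i, r) = ∑ j ∈ Finset.range N, f j := by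
    rw [Finset.sum_range]
    simp only [Matrix.mulVec, dotProduct, respMat, stack, Matrix.of_apply,
      Fintype.sum_prod_type, f]
    refine Finset.sum_congr rfl fun j _ => ?_
    split_ifs <;> simp
  have h2 : ∑ j ∈ Finset.range N, f j = ∑ j ∈ Finset.range ((i : ℕ) + 1), f j := by
    symm
    refine Finset.sum_subset (Finset.range_subset_range.2 i.2) fun j _ hj => ?_
    have hj' : ¬ j < (i : ℕ) + 1 := fun h => hj (Finset.mem_range.2 h)
    simp only [f]
    rw [if_neg (by omega), if_neg (by omega)]
  rw [h1, h2, Finset.sum_range_succ, resp, traj_eq_sum, Matrix.mulVec_sum, Pi.add_apply,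
    Finset.sum_apply]
  congr 1
  · refine Finset.sum_congr rfl fun j hj => ?_
    have hj' := Finset.mem_range.1 hj
    simp only [f]
    rw [if_neg (by omega), if_pos hj', Matrix.mulVec_mulVec, ← Matrix.mul_assoc,
      Nat.sub_right_comm]
  · simp [f]

lemma respMat_mulVec_stack_eq_zero_iff (u : ℕ → Fin m → ℝ) (N : ℕ) :
    (respMat A B C D N).mulVec (stack N u) = 0 ↔ ∀ k < N, resp A B C D 0 u k = 0 := by
  constructor
  · intro h k hk
    ext r
    rw [← respMat_mulVec_stack A B C D u N ⟨k, hk⟩ r, h]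
    rfl
  · intro h
    ext ⟨i, r⟩
    rw [respMat_mulVec_stack, h i i.2]
    rfl

/-- An input producing zero output up to time `N`, followed by an input producing zero output from
the state reached at time `N`, produces zero output forever. -/
lemma zero_resp_concat {u v : ℕ → Fin m → ℝ} {N : ℕ} (x : Fin n → ℝ)
    (hu : ∀ k < N, resp A B C D x u k = 0)
    (hv : ∀ k, resp A B C D (traj A B x u N) v k = 0) (k : ℕ) :
    resp A B C D x (fun j => if j < N then u j else v (j - N)) k = 0 := by
  by_cases hk : k < N
  · rw [← hu k hk, resp, resp, traj_congr A B x (v := u) fun j hj => if_pos (hj.trans hk),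
      if_pos hk]
  · obtain ⟨k, rfl⟩ := Nat.exists_eq_add_of_le (not_lt.1 hk)
    rw [resp_add, traj_congr A B x (v := u) fun j hj => if_pos hj, ← hv k]
    simp

end Dynamics

/-! ### Sparse vectors -/

section Sparse

variable {s : ℕ}

lemma mem_sparseVecs {v : Fin m → ℝ} :
    v ∈ sparseVecs m s ↔ ∃ S : Finset (Fin m), S.card ≤ s ∧ v ∈ suppSpan S := by
  simp [sparseVecs]

lemma zero_mem_sparseVecs : (0 : Fin m → ℝ) ∈ sparseVecs m s :=
  mem_sparseVecs.2 ⟨∅, by simp, fun _ _ => rfl⟩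

lemma sub_mem_suppSpan_union {S T : Finset (Fin m)} {v w : Fin m → ℝ}
    (hv : v ∈ suppSpan S) (hw : w ∈ suppSpan T) : v - w ∈ suppSpan (S ∪ T) := by
  intro i hi
  rw [Finset.mem_union, not_or] at hi
  simp [hv i hi.1, hw i hi.2]

lemma card_union_le_two_mul {S T : Finset (Fin m)} (hS : S.card ≤ s) (hT : T.card ≤ s) :
    (S ∪ T).card ≤ 2 * s :=
  (Finset.card_union_le S T).trans (by omega)

lemma sparse_sub {v w : Fin m → ℝ} (hv : v ∈ sparseVecs m s) (hw : w ∈ sparseVecs m s) :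
    v - w ∈ sparseVecs m (2 * s) := by
  obtain ⟨S, hS, hv⟩ := mem_sparseVecs.1 hv
  obtain ⟨T, hT, hw⟩ := mem_sparseVecs.1 hw
  exact mem_sparseVecs.2 ⟨S ∪ T, card_union_le_two_mul hS hT, sub_mem_suppSpan_union hv hw⟩

/-- The support is cut into a part of at most `s` indices and the remaining at most `s` ones. -/
lemma sparse_split {w : Fin m → ℝ} (hw : w ∈ sparseVecs m (2 * s)) :
    ∃ a ∈ sparseVecs m s, ∃ b ∈ sparseVecs m s, w = a - b := by
  obtain ⟨S, hS, hw⟩ := mem_sparseVecs.1 hw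
  obtain ⟨T, hTS, hT⟩ := Finset.exists_subset_card_eq (Nat.min_le_right s S.card)
  have hc : (S \ T).card = S.card - T.card := Finset.card_sdiff_of_subset hTS
  refine ⟨fun i => if i ∈ T then w i else 0, mem_sparseVecs.2 ⟨T, by omega, ?_⟩,
    fun i => if i ∈ T then 0 else - w i, mem_sparseVecs.2 ⟨S \ T, by omega, ?_⟩, ?_⟩
  · intro i hi
    exact if_neg hi
  · intro i hi
    by_cases hiT : i ∈ T
    · exact if_pos hiT
    · have : i ∉ S := fun h => hi (Finset.mem_sdiff.2 ⟨h, hiT⟩)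
      simp [hw i this]
  · ext i
    by_cases hiT : i ∈ T <;> simp [hiT]

end Sparse

/-! ### Sparse invertibility -/

/-- Invertibility as a kernel condition: a `2s`-sparse input invisible from the zero state
vanishes, being a difference of two `s`-sparse inputs with equal responses. -/
lemma leftSparseInv.eq_zero {A : Matrix (Fin n) (Fin n) ℝ}
    {B : Matrix (Fin n) (Fin m) ℝ} {C : Matrix (Fin p) (Fin n) ℝ} {D : Matrix (Fin p) (Fin m) ℝ}
    {s : ℕ} (h : leftSparseInv A B C D s) {w : ℕ → Fin m → ℝ}
    (hw : ∀ k, w k ∈ sparseVecs m (2 * s)) (h0 : ∀ k, resp A B C D 0 w k = 0) (k : ℕ) :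
    w k = 0 := by
  choose a ha b hb hab using fun k => sparse_split (hw k)
  have hw' : w = fun j => a j - b j := funext hab
  have hresp (k : ℕ) : resp A B C D 0 a k = resp A B C D 0 b k := by
    rw [← sub_eq_zero, ← resp_sub, ← hw', sub_zero, h0]
  rw [hab, h a b ha hb hresp, sub_self]

/-- Proposition 3 (geometric characterization): the three characterizations of left
`s`-sparse invertibility are equivalent. -/
theorem leftSparseInv_tfae (n m p : ℕ)
    (A : Matrix (Fin n) (Fin n) ℝ) (B : Matrix (Fin n) (Fin m) ℝ)
    (C : Matrix (Fin p) (Fin n) ℝ) (D : Matrix (Fin p) (Fin m) ℝ) (s : ℕ) :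
    List.TFAE
      [ -- (1) Σ is left s-sparse invertible
        leftSparseInv A B C D s,
        -- (2) T(2s) ∩ V(2s) = {0} and ∀ S ∈ Δ_{2s}, ker [D_S; B_S] = 0
        stronglyReach A B C D (2 * s) ∩ weaklyUnobs A B C D (2 * s) = {0} ∧
          (∀ S : Finset (Fin m), S.card ≤ 2 * s →
            ∀ v ∈ suppSpan S, D.mulVec v = 0 → B.mulVec v = 0 → v = 0),
        -- (3) ∀ S, T ∈ Δ_s, ker D_{S∪T} ∩ B^{-1}V(2s) = 0
        ∀ S T : Finset (Fin m), S.card ≤ s → T.card ≤ s →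
          ∀ v ∈ suppSpan (S ∪ T), D.mulVec v = 0 →
            B.mulVec v ∈ weaklyUnobs A B C D (2 * s) → v = 0 ] := by
  tfae_have 1 → 2 := by
    intro h
    refine ⟨Set.eq_singleton_iff_unique_mem.2 ⟨⟨?_, ?_⟩, ?_⟩, ?_⟩
    · refine ⟨1, le_rfl, fun _ => 0, fun _ => zero_mem_sparseVecs, ?_, ?_⟩
      · rw [respMat_mulVec_stack_eq_zero_iff]
        exact fun k _ => resp_zero_input A B C D k
      · rw [ctrbMat_mulVec_stack, traj_zero_input]
    · exact ⟨fun _ => 0, fun _ => zero_mem_sparseVecs, resp_zero_input A B C D⟩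
    · rintro x ⟨⟨N, -, u, hu, hΓ, hx⟩, v, hv, hxv⟩
      rw [respMat_mulVec_stack_eq_zero_iff] at hΓ
      rw [ctrbMat_mulVec_stack] at hx
      subst hx
      have hw := h.eq_zero (fun k => by split_ifs <;> simp only [hu, hv])
        (zero_resp_concat A B C D 0 hΓ hxv)
      rw [traj_congr A B 0 (v := fun _ => 0) fun k hk => ?_, traj_zero_input]
      simpa [hk] using hw k
    · intro S hS v hv hD hB
      -- The input `v, 0, 0, …` is invisible.
      have hw := h.eq_zero (w := fun j => if j < 1 then v else 0)
        (fun k => by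
          split_ifs
          exacts [mem_sparseVecs.2 ⟨S, hS, hv⟩, zero_mem_sparseVecs])
        (zero_resp_concat A B C D (u := fun _ => v) (v := fun _ => 0) (N := 1) 0
          (fun k hk => by
            obtain rfl : k = 0 := by omega
            simp [resp, traj, hD])
          (fun k => by
            have : traj A B 0 (fun _ => v) 1 = 0 := by simp [traj, hB]
            rw [this, resp_zero_input]))
      simpa using hw 0
  tfae_have 2 → 3 := by
    rintro ⟨hTV, hker⟩ S T hS hT v hv hD hV
    have hc := card_union_le_two_mul hS hT
    refine hker _ hc v hv hD ?_
    have hmem : B.mulVec v ∈ stronglyReach A B C D (2 * s) := by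
      refine ⟨1, le_rfl, fun _ => v, fun _ => mem_sparseVecs.2 ⟨_, hc, hv⟩, ?_, ?_⟩
      · rw [respMat_mulVec_stack_eq_zero_iff]
        intro k hk
        obtain rfl : k = 0 := by omega
        simp [resp, traj, hD]
      · rw [ctrbMat_mulVec_stack]
        simp [traj]
    exact hTV.subset ⟨hmem, hV⟩
  tfae_have 3 → 1 := by
    intro h u u' hu hu' hresp
    set w : ℕ → Fin m → ℝ := fun k => u k - u' k with hwdef
    have hw (k : ℕ) : w k ∈ sparseVecs m (2 * s) := sparse_sub (hu k) (hu' k)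
    have h0 (k : ℕ) : resp A B C D 0 w k = 0 := by
      have := resp_sub A B C D 0 0 u u' k
      rwa [sub_zero, hresp, sub_self] at this
    -- If the state is zero at time `k`, the input at time `k` satisfies the hypotheses of (3).
    have step (k : ℕ) (hk : traj A B 0 w k = 0) : w k = 0 := by
      obtain ⟨S, hS, huS⟩ := mem_sparseVecs.1 (hu k)
      obtain ⟨T, hT, huT⟩ := mem_sparseVecs.1 (hu' k)
      refine h S T hS hT _ (sub_mem_suppSpan_union huS huT) ?_
        ⟨fun j => w (k + 1 + j), fun j => hw _, fun j => ?_⟩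
      · simpa [resp, hk] using h0 k
      · have := h0 (k + 1 + j)
        rw [resp_add, traj, hk, Matrix.mulVec_zero, zero_add] at this
        exact this
    have htraj (k : ℕ) : traj A B 0 w k = 0 := by
      induction k with
      | zero => rfl
      | succ k ih => rw [traj, ih, step k ih, Matrix.mulVec_zero, Matrix.mulVec_zero, add_zero]
    funext k
    exact sub_eq_zero.1 (step k (htraj k))
  tfae_finish

end SparseInv
end

section
/- Let Σ_1 = (A, B, C_1, D) be the system with n = 4, m = 4, p = 3, where A = [[0,0,0,1],[1,0,0,0],[0,1,0,0],[0,0,1,0]], B = [[−1,0,0,1],[1,−1,0,0],[0,1,−1,0],[0,0,1,−1]], C_1 = [[1,0,0,0],[0,1,0,0],[0,0,1,0]], and D = 0 ∈ ℝ^{3×4}. Then Σ_1 is left 1-sparse invertible; moreover, for every S_0 ⊆ {0,1,2,3} with |S_0| ≤ 2, the submatrix (C_1 B)_{S_0} of columns of C_1 B indexed by S_0 has full column rank |S_0|. -/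
/-!
Both the shift `A` and the input matrix `B` interact simply with the sum of the coordinates: `A`
preserves it, and every column of `B` sums to zero. Hence every trajectory from `0` stays in the
hyperplane `∑ i, x i = 0`, on which the first three coordinates, that is, the output, determine the
state (`state_eq_of_output_eq`). Inputs with equal outputs therefore have equal states, so
`B *ᵥ u k = B *ᵥ u' k` at every time `k`. The kernel of `B`, and already that of `C₁ * B`, consists
of constant vectors, and a constant vector of `ℝ⁴` with a zero coordinate vanishes; this applies to
`u k - u' k`, which is `2`-sparse, and to the kernel of the column submatrices of `C₁ * B`
(`eq_zero_of_output_input_eq_zero`).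
-/

open Matrix BigOperators

namespace SparseInv

variable {n m p : ℕ}

/-- The state matrix: the cyclic shift of the four coordinates. -/
abbrev exA : Matrix (Fin 4) (Fin 4) ℝ := !![0,0,0,1; 1,0,0,0; 0,1,0,0; 0,0,1,0]

/-- The input matrix `A - 1`. -/
abbrev exB : Matrix (Fin 4) (Fin 4) ℝ := !![-1,0,0,1; 1,-1,0,0; 0,1,-1,0; 0,0,1,-1]

/-- The output matrix `C₁`, reading the first three coordinates of the state. -/
abbrev exC : Matrix (Fin 3) (Fin 4) ℝ := !![1,0,0,0; 0,1,0,0; 0,0,1,0]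

lemma exA_mulVec (x : Fin 4 → ℝ) : exA *ᵥ x = ![x 3, x 0, x 1, x 2] := by
  ext i; fin_cases i <;> simp [Matrix.mulVec, dotProduct, Fin.sum_univ_four]

lemma exB_mulVec (v : Fin 4 → ℝ) :
    exB *ᵥ v = ![v 3 - v 0, v 0 - v 1, v 1 - v 2, v 2 - v 3] := by
  ext i; fin_cases i <;> simp [Matrix.mulVec, dotProduct, Fin.sum_univ_four] <;> ring

lemma exC_mulVec (x : Fin 4 → ℝ) : exC *ᵥ x = ![x 0, x 1, x 2] := by
  ext i; fin_cases i <;> simp [Matrix.mulVec, dotProduct, Fin.sum_univ_four]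

/-- The coordinate sum is conserved along trajectories, so it vanishes when started at `0`. -/
lemma sum_traj_eq_zero (u : ℕ → Fin 4 → ℝ) (k : ℕ) : ∑ i, traj exA exB 0 u k i = 0 := by
  induction k with
  | zero => simp [traj]
  | succ k ih =>
    rw [Fin.sum_univ_four] at ih ⊢
    simp only [traj, exA_mulVec, exB_mulVec, Pi.add_apply, Matrix.cons_val]
    linarith

/-- The output determines a state whose coordinate sum is known. -/
lemma state_eq_of_output_eq {x y : Fin 4 → ℝ} (hx : ∑ i, x i = 0) (hy : ∑ i, y i = 0)
    (h : exC *ᵥ x = exC *ᵥ y) : x = y := by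
  rw [Fin.sum_univ_four] at hx hy
  rw [exC_mulVec, exC_mulVec] at h
  have h0 : x 0 = y 0 := congrFun h 0
  have h1 : x 1 = y 1 := congrFun h 1
  have h2 : x 2 = y 2 := congrFun h 2
  have h3 : x 3 = y 3 := by linarith
  ext i; fin_cases i <;> assumption

/-- The kernel of `C₁ * B` consists of constant vectors, so its only element supported on a proper
subset of the coordinates is `0`. -/
lemma eq_zero_of_output_input_eq_zero {v : Fin 4 → ℝ} {S : Finset (Fin 4)} (hS : S.card ≤ 2)
    (hv : v ∈ suppSpan S) (h : exC *ᵥ (exB *ᵥ v) = 0) : v = 0 := by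
  rw [exC_mulVec, exB_mulVec] at h
  have h0 : v 3 - v 0 = 0 := congrFun h 0
  have h1 : v 0 - v 1 = 0 := congrFun h 1
  have h2 : v 1 - v 2 = 0 := congrFun h 2
  obtain ⟨i, hi⟩ : ∃ i, i ∉ S := by
    by_contra! hall
    rw [Finset.eq_univ_of_forall hall] at hS
    simp at hS
  have hvi := hv i hi
  ext j
  fin_cases i <;> fin_cases j <;> simp at hvi ⊢ <;> linarith

lemma exists_suppSpan_sub {m s t : ℕ} {v w : Fin m → ℝ} (hv : v ∈ sparseVecs m s)
    (hw : w ∈ sparseVecs m t) : ∃ S : Finset (Fin m), S.card ≤ s + t ∧ v - w ∈ suppSpan S := by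
  simp only [sparseVecs, Set.mem_iUnion, Set.mem_ofPred_eq, exists_prop] at hv hw
  obtain ⟨S, hS, hv⟩ := hv
  obtain ⟨T, hT, hw⟩ := hw
  refine ⟨S ∪ T, (Finset.card_union_le S T).trans (by omega), fun i hi => ?_⟩
  rw [Finset.mem_union, not_or] at hi
  simp [hv i hi.1, hw i hi.2]

lemma leftSparseInv_example : leftSparseInv exA exB exC (0 : Matrix (Fin 3) (Fin 4) ℝ) 1 := by
  intro u u' hu hu' h
  have hstate : ∀ k, traj exA exB 0 u k = traj exA exB 0 u' k := fun k =>
    state_eq_of_output_eq (sum_traj_eq_zero u k) (sum_traj_eq_zero u' k)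
      (by simpa [resp] using h k)
  funext k
  have hB : exB *ᵥ u k = exB *ᵥ u' k := by
    have h1 := hstate (k + 1)
    rw [traj, traj, hstate k] at h1
    exact add_left_cancel h1
  obtain ⟨S, hS, hsupp⟩ := exists_suppSpan_sub (hu k) (hu' k)
  refine sub_eq_zero.mp (eq_zero_of_output_input_eq_zero hS hsupp ?_)
  rw [Matrix.mulVec_sub, hB, sub_self, Matrix.mulVec_zero]

/-- A column submatrix acts as the full matrix on the extension by zero. -/
lemma submatrix_mulVec_eq {p m : ℕ} (M : Matrix (Fin p) (Fin m) ℝ) (S : Finset (Fin m))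
    (w : {j // j ∈ S} → ℝ) :
    M.submatrix id (fun j : {j // j ∈ S} => (j : Fin m)) *ᵥ w =
      M *ᵥ (fun j => if hj : j ∈ S then w ⟨j, hj⟩ else 0) := by
  ext i
  simp only [Matrix.mulVec, dotProduct, Matrix.submatrix_apply, id_eq]
  rw [← Finset.sum_subset (Finset.subset_univ S) (fun j _ hj => by simp [hj]),
    ← Finset.sum_coe_sort S]
  exact Finset.sum_congr rfl fun j _ => by simp

lemma rank_submatrix_example (S : Finset (Fin 4)) (hS : S.card ≤ 2) :
    ((exC * exB).submatrix id (fun j : {j // j ∈ S} => (j : Fin 4))).rank = S.card := by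
  rw [Matrix.rank, LinearMap.finrank_range_of_inj]
  · simp
  rw [← LinearMap.ker_eq_bot, LinearMap.ker_eq_bot']
  intro w hw
  rw [Matrix.mulVecLin_apply, submatrix_mulVec_eq, ← Matrix.mulVec_mulVec] at hw
  have h0 := eq_zero_of_output_input_eq_zero hS (fun j hj => by simp [hj]) hw
  ext j
  simpa using congrFun h0 j

/-- The example system `Σ_1` (with `α = 1`) is left `1`-sparse invertible, and every
column-submatrix of `C_1 B` with at most two columns has full column rank. -/
theorem example_alpha_one_invertible :
    leftSparseInv
      (!![0,0,0,1; 1,0,0,0; 0,1,0,0; 0,0,1,0] : Matrix (Fin 4) (Fin 4) ℝ)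
      (!![-1,0,0,1; 1,-1,0,0; 0,1,-1,0; 0,0,1,-1] : Matrix (Fin 4) (Fin 4) ℝ)
      (!![1,0,0,0; 0,1,0,0; 0,0,1,0] : Matrix (Fin 3) (Fin 4) ℝ)
      (0 : Matrix (Fin 3) (Fin 4) ℝ) 1 ∧
    ∀ S : Finset (Fin 4), S.card ≤ 2 →
      ((( !![1,0,0,0; 0,1,0,0; 0,0,1,0] : Matrix (Fin 3) (Fin 4) ℝ) *
          (!![-1,0,0,1; 1,-1,0,0; 0,1,-1,0; 0,0,1,-1] : Matrix (Fin 4) (Fin 4) ℝ)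
        ).submatrix id (fun j : {j // j ∈ S} => (j : Fin 4))).rank = S.card :=
  ⟨leftSparseInv_example, rank_submatrix_example⟩

end SparseInv
end

section
/- Let Σ_0 = (A, B, C_0, D) be the system with n = 4, m = 4, p = 3, where A = [[0,0,0,1],[1,0,0,0],[0,1,0,0],[0,0,1,0]], B = [[−1,0,0,1],[1,−1,0,0],[0,1,−1,0],[0,0,1,−1]], C_0 = [[1,0,0,0],[0,0,0,0],[0,0,1,0]], and D = 0 ∈ ℝ^{3×4}. Then the weakly 1-sparse unobservable set of Σ_0 is V(1) = span{e_2} ∪ span{e_4} and the weakly 2-sparse unobservable set is V(2) = span{e_2, e_4}, where e_2, e_4 are the second and fourth standard basis vectors of ℝ^4. -/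
/-!
For `Σ_0` the output vanishes exactly when the first and third coordinates of the state do, so an
unobservable trajectory consists of states `(0, a, 0, b)`.  Under the input `u` such a state moves to
`(b - u₀ + u₃, u₀ - u₁, a + u₁ - u₂, u₂ - u₃)`, hence the next output vanishes iff
`u₀ - u₃ = b` and `u₂ - u₁ = a`.  A single active input meets both equations only if `a = 0` or
`b = 0` (`eq_zero_of_weaklyUnobs_one`).  Conversely `u = (b, 0, a, 0)` meets them and sends
`(0, a, 0, b)` to `(0, b, 0, a)`, so repeating it with `a` and `b` exchanged keeps the output zero
forever (`resp_swapInput`).  This input is 2-sparse, and 1-sparse when `a = 0` or `b = 0`.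
-/

open Matrix BigOperators

namespace SparseInv

variable {n m p : ℕ}

/-- The state matrix of `Σ_0`: the cyclic shift of the coordinates. -/
def A₀ : Matrix (Fin 4) (Fin 4) ℝ := !![0,0,0,1; 1,0,0,0; 0,1,0,0; 0,0,1,0]

/-- The input matrix of `Σ_0`. -/
def B₀ : Matrix (Fin 4) (Fin 4) ℝ := !![-1,0,0,1; 1,-1,0,0; 0,1,-1,0; 0,0,1,-1]

/-- The output matrix of `Σ_0`, which reads off the first and third coordinates. -/
def C₀ : Matrix (Fin 3) (Fin 4) ℝ := !![1,0,0,0; 0,0,0,0; 0,0,1,0]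

lemma step_eq (x u : Fin 4 → ℝ) :
    A₀.mulVec x + B₀.mulVec u =
      ![x 3 - u 0 + u 3, x 0 + u 0 - u 1, x 1 + u 1 - u 2, x 2 + u 2 - u 3] := by
  funext i
  fin_cases i <;> simp [A₀, B₀, dotProduct, Fin.sum_univ_four] <;> ring

lemma resp_eq_zero_iff (x : Fin 4 → ℝ) (u : ℕ → Fin 4 → ℝ) (k : ℕ) :
    resp A₀ B₀ C₀ 0 x u k = 0 ↔ traj A₀ B₀ x u k 0 = 0 ∧ traj A₀ B₀ x u k 2 = 0 := by
  simp [resp, C₀, funext_iff, Fin.forall_fin_succ, dotProduct, Fin.sum_univ_four]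

/-- Membership in a weakly unobservable set forces the first and third coordinates to vanish, and
vanishing of the output at time `1` gives the equations for the first input. -/
lemma exists_input_of_weaklyUnobs {s : ℕ} {x : Fin 4 → ℝ} (hx : x ∈ weaklyUnobs A₀ B₀ C₀ 0 s) :
    x 0 = 0 ∧ x 2 = 0 ∧ ∃ v ∈ sparseVecs 4 s, x 3 = v 0 - v 3 ∧ x 1 = v 2 - v 1 := by
  obtain ⟨u, hu, hy⟩ := hx
  have h0 := (resp_eq_zero_iff x u 0).1 (hy 0)
  have h1 := (resp_eq_zero_iff x u 1).1 (hy 1)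
  simp only [traj, step_eq] at h0 h1
  simp only [Matrix.cons_val] at h1
  exact ⟨h0.1, h0.2, u 0, hu 0, by linarith [h1.1], by linarith [h1.2]⟩

lemma eq_zero_of_weaklyUnobs_one {x : Fin 4 → ℝ} (hx : x ∈ weaklyUnobs A₀ B₀ C₀ 0 1) :
    x 1 = 0 ∨ x 3 = 0 := by
  obtain ⟨-, -, v, hv, h3, h1⟩ := exists_input_of_weaklyUnobs hx
  simp only [sparseVecs, Set.mem_iUnion, Set.mem_ofPred_eq, suppSpan] at hv
  obtain ⟨S, hS, hv⟩ := hv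
  rw [Finset.card_le_one] at hS
  by_cases h : 0 ∈ S ∨ 3 ∈ S
  · -- the only active input is the first or the fourth, so the middle two are zero
    left
    have e1 : 1 ∉ S := fun m => by rcases h with h | h <;> exact absurd (hS _ h _ m) (by decide)
    have e2 : 2 ∉ S := fun m => by rcases h with h | h <;> exact absurd (hS _ h _ m) (by decide)
    rw [h1, hv _ e1, hv _ e2, sub_zero]
  · right
    rw [not_or] at h
    rw [h3, hv _ h.1, hv _ h.2, sub_zero]

/-- The input alternating between `(b, 0, a, 0)` and `(a, 0, b, 0)`, which moves the state
`(0, a, 0, b)` back and forth between itself and `(0, b, 0, a)`. -/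
def swapInput (a b : ℝ) (k : ℕ) : Fin 4 → ℝ :=
  if Even k then ![b, 0, a, 0] else ![a, 0, b, 0]

lemma traj_swapInput (a b : ℝ) (k : ℕ) :
    traj A₀ B₀ ![0, a, 0, b] (swapInput a b) k =
      if Even k then ![0, a, 0, b] else ![0, b, 0, a] := by
  induction k with
  | zero => simp [traj]
  | succ k ih =>
    rw [traj, ih, step_eq]
    by_cases hk : Even k <;> simp [swapInput, hk, Nat.even_add_one]

lemma resp_swapInput (a b : ℝ) (k : ℕ) :
    resp A₀ B₀ C₀ 0 ![0, a, 0, b] (swapInput a b) k = 0 := by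
  rw [resp_eq_zero_iff, traj_swapInput]
  split_ifs <;> simp

lemma mem_sparseVecs_of_support {s : ℕ} {v : Fin 4 → ℝ} (S : Finset (Fin 4)) (hS : S.card ≤ s)
    (hv : ∀ i ∉ S, v i = 0) : v ∈ sparseVecs 4 s := by
  simp only [sparseVecs, Set.mem_iUnion, Set.mem_ofPred_eq]
  exact ⟨S, hS, hv⟩

lemma mem_weaklyUnobs_two (a b : ℝ) : ![0, a, 0, b] ∈ weaklyUnobs A₀ B₀ C₀ 0 2 := by
  refine ⟨swapInput a b, fun k => mem_sparseVecs_of_support {0, 2} (by decide) ?_,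
    resp_swapInput a b⟩
  intro i hi
  unfold swapInput
  split_ifs <;> fin_cases i <;> simp_all

lemma mem_weaklyUnobs_one {a b : ℝ} (h : a = 0 ∨ b = 0) :
    ![0, a, 0, b] ∈ weaklyUnobs A₀ B₀ C₀ 0 1 := by
  refine ⟨swapInput a b, fun k => ?_, resp_swapInput a b⟩
  -- the nonzero one of `a`, `b` sits in the first or the third input, according to the parity
  by_cases hk : Even k <;> rcases h with rfl | rfl
  · refine mem_sparseVecs_of_support {0} (by decide) fun i hi => ?_
    fin_cases i <;> simp_all [swapInput]
  · refine mem_sparseVecs_of_support {2} (by decide) fun i hi => ?_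
    fin_cases i <;> simp_all [swapInput]
  · refine mem_sparseVecs_of_support {2} (by decide) fun i hi => ?_
    rw [swapInput, if_neg hk]
    fin_cases i <;> simp_all
  · refine mem_sparseVecs_of_support {0} (by decide) fun i hi => ?_
    rw [swapInput, if_neg hk]
    fin_cases i <;> simp_all

lemma eq_vec {x : Fin 4 → ℝ} (h0 : x 0 = 0) (h2 : x 2 = 0) : x = ![0, x 1, 0, x 3] := by
  funext i
  fin_cases i <;> simp [h0, h2]

lemma weaklyUnobs_one : weaklyUnobs A₀ B₀ C₀ 0 1 =
    (Submodule.span ℝ ({Pi.single 1 1} : Set (Fin 4 → ℝ)) : Set (Fin 4 → ℝ)) ∪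
    (Submodule.span ℝ ({Pi.single 3 1} : Set (Fin 4 → ℝ)) : Set (Fin 4 → ℝ)) := by
  ext x
  simp only [Set.mem_union, SetLike.mem_coe, Submodule.mem_span_singleton]
  constructor
  · intro hx
    obtain ⟨h0, h2, -⟩ := exists_input_of_weaklyUnobs hx
    rcases eq_zero_of_weaklyUnobs_one hx with h | h
    · exact Or.inr ⟨x 3, by funext i; fin_cases i <;> simp [h0, h2, h]⟩
    · exact Or.inl ⟨x 1, by funext i; fin_cases i <;> simp [h0, h2, h]⟩
  · rintro (⟨c, rfl⟩ | ⟨c, rfl⟩) <;> rw [eq_vec (x := c • _) (by simp) (by simp)] <;>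
      exact mem_weaklyUnobs_one (by simp)

lemma weaklyUnobs_two : weaklyUnobs A₀ B₀ C₀ 0 2 =
    (Submodule.span ℝ ({Pi.single 1 1, Pi.single 3 1} : Set (Fin 4 → ℝ)) : Set (Fin 4 → ℝ)) := by
  ext x
  simp only [SetLike.mem_coe, Submodule.mem_span_pair]
  constructor
  · intro hx
    obtain ⟨h0, h2, -⟩ := exists_input_of_weaklyUnobs hx
    exact ⟨x 1, x 3, by funext i; fin_cases i <;> simp [h0, h2]⟩
  · rintro ⟨a, b, rfl⟩
    rw [eq_vec (x := a • _ + b • _) (by simp) (by simp)]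
    exact mem_weaklyUnobs_two _ _

/-- For the example system `Σ_0` (with `α = 0`): `V(1) = span{e_2} ∪ span{e_4}` and
`V(2) = span{e_2, e_4}` (0-indexed: `e_2 = Pi.single 1 1`, `e_4 = Pi.single 3 1`). -/
theorem example_alpha_zero_weaklyUnobs :
    weaklyUnobs
      (!![0,0,0,1; 1,0,0,0; 0,1,0,0; 0,0,1,0] : Matrix (Fin 4) (Fin 4) ℝ)
      (!![-1,0,0,1; 1,-1,0,0; 0,1,-1,0; 0,0,1,-1] : Matrix (Fin 4) (Fin 4) ℝ)
      (!![1,0,0,0; 0,0,0,0; 0,0,1,0] : Matrix (Fin 3) (Fin 4) ℝ)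
      (0 : Matrix (Fin 3) (Fin 4) ℝ) 1 =
      (Submodule.span ℝ ({Pi.single 1 1} : Set (Fin 4 → ℝ)) : Set (Fin 4 → ℝ)) ∪
      (Submodule.span ℝ ({Pi.single 3 1} : Set (Fin 4 → ℝ)) : Set (Fin 4 → ℝ)) ∧
    weaklyUnobs
      (!![0,0,0,1; 1,0,0,0; 0,1,0,0; 0,0,1,0] : Matrix (Fin 4) (Fin 4) ℝ)
      (!![-1,0,0,1; 1,-1,0,0; 0,1,-1,0; 0,0,1,-1] : Matrix (Fin 4) (Fin 4) ℝ)
      (!![1,0,0,0; 0,0,0,0; 0,0,1,0] : Matrix (Fin 3) (Fin 4) ℝ)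
      (0 : Matrix (Fin 3) (Fin 4) ℝ) 2 =
      (Submodule.span ℝ
        ({Pi.single 1 1, Pi.single 3 1} : Set (Fin 4 → ℝ)) :
        Set (Fin 4 → ℝ)) := by
  exact ⟨weaklyUnobs_one, weaklyUnobs_two⟩

end SparseInv
end

section
/- Let Σ_0 = (A, B, C_0, D) be the system with n = 4, m = 4, p = 3, where A = [[0,0,0,1],[1,0,0,0],[0,1,0,0],[0,0,1,0]], B = [[−1,0,0,1],[1,−1,0,0],[0,1,−1,0],[0,0,1,−1]], C_0 = [[1,0,0,0],[0,0,0,0],[0,0,1,0]], and D = 0 ∈ ℝ^{3×4}. Then Σ_0 is not left 1-sparse invertible: there exist input sequences u, u': ℕ → ⟨Δ_1⟩ with u ≠ u' and γ_0(u) = γ_0(u'). -/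
/-!
Subtracting two 1-sparse inputs gives a 2-sparse input, so it suffices to exhibit a nonzero input
whose values are 2-sparse and whose zero-state response vanishes. The input `e₀ + e₃` at time `0`
moves the state from `0` to `(0, 1, 0, -1)`, which `C` does not see, and `e₂ + e₃` at time `1` moves
it back to `0`. Splitting each of these into its two coordinates gives `inputOne`
(`e₀`, then `e₂`, then zero) and `inputTwo` (`-e₃`, `-e₃`, then zero). The two trajectories agree
at time `0` and from time `2` on, and at time `1` they differ by a vector in `ker C`.
-/

open Matrix BigOperators

namespace SparseInv

variable {n m p : ℕ}

/-- The input `e₀, e₂, 0, 0, …`. -/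
def inputOne : ℕ → Fin 4 → ℝ
  | 0 => ![1, 0, 0, 0]
  | 1 => ![0, 0, 1, 0]
  | _ + 2 => 0

/-- The input `-e₃, -e₃, 0, 0, …`. -/
def inputTwo : ℕ → Fin 4 → ℝ
  | 0 => ![0, 0, 0, -1]
  | 1 => ![0, 0, 0, -1]
  | _ + 2 => 0

lemma mem_sparseVecs_one {v : Fin m → ℝ} (j : Fin m) (h : ∀ i, i ≠ j → v i = 0) :
    v ∈ sparseVecs m 1 := by
  simp only [sparseVecs, Set.mem_iUnion]
  refine ⟨{j}, by simp, fun i hi => h i (by simpa using hi)⟩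

/-- The example system `Σ_0` (with `α = 0`) is not left `1`-sparse invertible: there
exist distinct piecewise `1`-sparse inputs with identical zero-state responses. -/
theorem example_alpha_zero_not_invertible :
    ¬ leftSparseInv
      (!![0,0,0,1; 1,0,0,0; 0,1,0,0; 0,0,1,0] : Matrix (Fin 4) (Fin 4) ℝ)
      (!![-1,0,0,1; 1,-1,0,0; 0,1,-1,0; 0,0,1,-1] : Matrix (Fin 4) (Fin 4) ℝ)
      (!![1,0,0,0; 0,0,0,0; 0,0,1,0] : Matrix (Fin 3) (Fin 4) ℝ)
      (0 : Matrix (Fin 3) (Fin 4) ℝ) 1 := by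
  intro hinv
  have huu := hinv inputOne inputTwo ?_ ?_ ?_
  · have := congrFun (congrFun huu 0) 0
    simp [inputOne, inputTwo] at this
  · rintro (_ | _ | k)
    · exact mem_sparseVecs_one 0 fun i hi => by fin_cases i <;> simp_all [inputOne]
    · exact mem_sparseVecs_one 2 fun i hi => by fin_cases i <;> simp_all [inputOne]
    · exact mem_sparseVecs_one 0 fun i _ => rfl
  · rintro (_ | _ | k)
    · exact mem_sparseVecs_one 3 fun i hi => by fin_cases i <;> simp_all [inputTwo]
    · exact mem_sparseVecs_one 3 fun i hi => by fin_cases i <;> simp_all [inputTwo]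
    · exact mem_sparseVecs_one 0 fun i _ => rfl
  · set A : Matrix (Fin 4) (Fin 4) ℝ := !![0,0,0,1; 1,0,0,0; 0,1,0,0; 0,0,1,0] with hA
    set B : Matrix (Fin 4) (Fin 4) ℝ := !![-1,0,0,1; 1,-1,0,0; 0,1,-1,0; 0,0,1,-1] with hB
    have h_merge : ∀ k, traj A B 0 inputOne (k + 2) = traj A B 0 inputTwo (k + 2) := by
      intro k
      induction k with
      | zero =>
        ext i
        fin_cases i <;>
          simp [traj, inputOne, inputTwo, hA, hB, mulVec, dotProduct, Fin.sum_univ_four]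
      | succ k ih =>
        change A.mulVec (traj A B 0 inputOne (k + 2)) + B.mulVec 0 =
          A.mulVec (traj A B 0 inputTwo (k + 2)) + B.mulVec 0
        rw [ih]
    rintro (_ | _ | k)
    · simp [resp, traj]
    · ext i
      fin_cases i <;>
        simp [resp, traj, inputOne, inputTwo, hB, mulVec, dotProduct, Fin.sum_univ_four]
    · simp only [resp, h_merge, zero_mulVec]

end SparseInv
end
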